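/- Let g = K³ with basis e₁, e₂, e₃ and the Leibniz bracket determined bilinearly by [e₁,e₁]_g = e₃ and all other brackets of basis vectors equal to zero, with its regular representation ρL(x)y = [x,y]_g, ρR(x)y = [y,x]_g. Then every linear map T : g → g whose matrix (a_{ij}) with respect to the basis (where Te_j = a_{1j}e₁ + a_{2j}e₂ + a_{3j}e₃) satisfies a_{12} = a_{13} = a_{23} = 0, a_{11} ≠ 0 and a_{33} = a_{11}/2 is a relative Rota-Baxter operator on (g,[·,·]_g) with respect to the regular representation. -/

import Mathlib

/-!
The bracket only sees the first coordinate: `[x, y] = x₁ y₁ e₃`. The vanishing entries say that the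
first coordinate functional is an eigenvector of the transpose of `T`, with eigenvalue `a₁₁`, and
that `e₃` is an eigenvector of `T`, with eigenvalue `a₃₃`. So `[T x, T y] = a₁₁² [x, y]` while
`T ([T x, y] + [x, T y]) = 2 a₁₁ a₃₃ [x, y]`, and the two agree as soon as `a₁₁² = 2 a₁₁ a₃₃`.
-/

open Module

section RotaBaxter

variable {R g V : Type*} [CommSemiring R] [AddCommMonoid g] [Module R g]
  [AddCommMonoid V] [Module R V]

/-- `T : V → g` is a relative Rota-Baxter operator on the algebra `(g, br)` with respect to the left
and right actions `ρL`, `ρR` of `g` on `V`. The Leibniz identity and the axioms of a representation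
are not part of the definition. The regular representation is `ρL = br`, `ρR = br.flip`. -/
def IsRelativeRotaBaxter (br : g →ₗ[R] g →ₗ[R] g) (ρL ρR : g →ₗ[R] V →ₗ[R] V)
    (T : V →ₗ[R] g) : Prop :=
  ∀ u v : V, br (T u) (T v) = T (ρL (T u) v + ρR (T v) u)

theorem isRelativeRotaBaxter_regular_of_smul {br : g →ₗ[R] g →ₗ[R] g} {T : g →ₗ[R] g} {l m : R}
    (hleft : ∀ x y, br (T x) y = l • br x y) (hright : ∀ x y, br x (T y) = l • br x y)
    (hbr : ∀ x y, T (br x y) = m • br x y) (hlm : l * l = 2 * (l * m)) :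
    IsRelativeRotaBaxter br br br.flip T := by
  intro x y
  calc br (T x) (T y) = (l * l) • br x y := by rw [hleft, hright, smul_smul]
    _ = (l * m) • br x y + (l * m) • br x y := by rw [hlm, two_mul, add_smul]
    _ = T (br (T x) y + br x (T y)) := by
      rw [hleft, hright, map_add, map_smul, hbr, smul_smul]

end RotaBaxter

section Basis

variable {ι R M N : Type*} [CommSemiring R] [AddCommMonoid M] [Module R M]
  [AddCommMonoid N] [Module R N] (e : Basis ι R M)

theorem bilin_apply_eq_repr_mul_repr_smul [DecidableEq ι] {B : M →ₗ[R] M →ₗ[R] N} {p : ι} {c : N}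
    (hB : ∀ i j, B (e i) (e j) = if i = p ∧ j = p then c else 0) (x y : M) :
    B x y = (e.repr x p * e.repr y p) • c := by
  have hB_eq : B = (e.coord p).smulRight ((e.coord p).smulRight c) := by
    refine e.ext fun i => e.ext fun j => ?_
    by_cases hi : i = p <;> by_cases hj : j = p <;> simp [hB, hi, hj]
  simp [hB_eq, mul_smul]

theorem repr_apply_eq_mul_of_row {T : M →ₗ[R] M} {p : ι}
    (hrow : ∀ j ≠ p, e.repr (T (e j)) p = 0) (x : M) :
    e.repr (T x) p = e.repr (T (e p)) p * e.repr x p := by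
  have hcoord : e.coord p ∘ₗ T = e.repr (T (e p)) p • e.coord p := by
    refine e.ext fun j => ?_
    by_cases hj : j = p <;> simp [hrow, hj]
  exact LinearMap.congr_fun hcoord x

theorem apply_basis_eq_smul_of_column {T : M →ₗ[R] M} {q : ι}
    (hcol : ∀ i ≠ q, e.repr (T (e q)) i = 0) :
    T (e q) = e.repr (T (e q)) q • e q := by
  refine e.ext_elem fun i => ?_
  by_cases hi : i = q <;> simp [hcol, hi]

theorem example_rota_baxter_second_family_general [DecidableEq ι]
    {br : M →ₗ[R] M →ₗ[R] M} {T : M →ₗ[R] M} {p q : ι}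
    (hbr : ∀ i j, br (e i) (e j) = if i = p ∧ j = p then e q else 0)
    (hrow : ∀ j ≠ p, e.repr (T (e j)) p = 0)
    (hcol : ∀ i ≠ q, e.repr (T (e q)) i = 0)
    (hdiag : e.repr (T (e p)) p * e.repr (T (e p)) p =
      2 * (e.repr (T (e p)) p * e.repr (T (e q)) q)) :
    IsRelativeRotaBaxter br br br.flip T := by
  have hbr_apply := bilin_apply_eq_repr_mul_repr_smul e hbr
  refine isRelativeRotaBaxter_regular_of_smul (fun x y => ?_) (fun x y => ?_) (fun x y => ?_) hdiag
  · rw [hbr_apply, hbr_apply, repr_apply_eq_mul_of_row e hrow, mul_assoc, mul_smul]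
  · rw [hbr_apply, hbr_apply, repr_apply_eq_mul_of_row e hrow, mul_left_comm, mul_smul]
  · rw [hbr_apply, map_smul, smul_comm, ← apply_basis_eq_smul_of_column e hcol]

end Basis

/-- On the 3-dimensional Leibniz algebra with `[e₁,e₁] = e₃` (all other
basis brackets zero), every linear map `T` whose matrix satisfies
`a₁₂ = a₁₃ = a₂₃ = 0`, `a₁₁ ≠ 0` and `a₃₃ = a₁₁/2` is a relative Rota-Baxter operator
with respect to the regular representation. -/
theorem example_rota_baxter_second_family
    {K : Type*} [Field K] [CharZero K]
    (e : Fin 3 → (Fin 3 → K))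
    (he : ∀ i : Fin 3, e i = Pi.single i 1)
    (br : (Fin 3 → K) →ₗ[K] (Fin 3 → K) →ₗ[K] (Fin 3 → K))
    (hbr : ∀ i j : Fin 3, br (e i) (e j) = if i = 0 ∧ j = 0 then e 2 else 0)
    (T : (Fin 3 → K) →ₗ[K] (Fin 3 → K))
    (a : Fin 3 → Fin 3 → K)
    (ha : ∀ i j : Fin 3, T (e j) i = a i j)
    (h12 : a 0 1 = 0) (h13 : a 0 2 = 0) (h23 : a 1 2 = 0)
    (h11 : a 0 0 ≠ 0) (h33 : a 2 2 = a 0 0 / 2) :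
    ∀ x y : Fin 3 → K, br (T x) (T y) = T (br (T x) y + br x (T y)) := by
  obtain rfl : e = Pi.basisFun K (Fin 3) := funext fun i => by simp [he]
  refine example_rota_baxter_second_family_general (Pi.basisFun K (Fin 3)) hbr ?_ ?_ ?_ <;>
    simp only [Pi.basisFun_repr, ha]
  · simp [Fin.forall_fin_succ, h12, h13]
  · simp [Fin.forall_fin_succ, h13, h23]
  · rw [h33]; ring
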